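/- arXiv:2106.14044 — 2 statements merged into one kernel-verified Lean document; each statement's English description precedes it below -/
import Mathlib

section
/- Let M = p_i^{n_i} p_j^{n_j} p_k^{n_k} with p_i, p_j, p_k distinct primes and n_j ≥ 2, and let A ⊆ ℤ_M. Suppose there exist a, a_i ∈ A with (a − a_i, M) = M/p_i such that a∗F_j ⊆ A, a_i∗F_k ⊆ A, and a∗F_k is not contained in A, and suppose both Φ_M and Φ_{M/p_j} divide A. Then: (i) for every a_k ∈ A with (a_k − a_i, M) = M/p_k such that no a′ ∈ A ∩ ℓ_k(a) satisfies (a_k − a′, M) = M/p_i, one has A_{M/p_j^2}[a] + A_{M/p_j^2}[a_k] ≥ φ(p_j^2); (ii) both M/p_j^2 and M/(p_i p_j^2 p_k) belong to Div(A); moreover, if A_{M/p_j^2}[a] > 0 then M/(p_i p_j^2) ∈ Div(A), and if A_{M/p_j^2}[a] < φ(p_j^2) then M/(p_j^2 p_k) ∈ Div(A). Here φ denotes Euler's totient, so φ(p_j^2) = p_j(p_j−1). -/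
open Polynomial

/-- The mask polynomial `A(X) = Σ_{a ∈ A} X^a` of a finite subset of `ZMod M`,
using the representatives in `{0, …, M-1}`. -/
noncomputable def maskPoly (M : ℕ) (A : Finset (ZMod M)) : Polynomial ℤ :=
  ∑ a ∈ A, X ^ a.val

/-- `Φ_s | A` : the `s`-th cyclotomic polynomial divides the mask polynomial of `A` in `ℤ[X]`. -/
def cycDvd (M s : ℕ) (A : Finset (ZMod M)) : Prop :=
  cyclotomic s ℤ ∣ maskPoly M A

/-- `A ⊕ B = ℤ_M` : every element of `ℤ_M` has a unique representation `a + b`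
with `a ∈ A` and `b ∈ B`. -/
def IsTiling (M : ℕ) (A B : Set (ZMod M)) : Prop :=
  ∀ z : ZMod M, ∃! ab : ZMod M × ZMod M, ab.1 ∈ A ∧ ab.2 ∈ B ∧ ab.1 + ab.2 = z

/-- The Coven–Meyerowitz property (T2): whenever `s_1, …, s_m` are prime powers dividing `M`,
powers of pairwise distinct primes, with `Φ_{s_t} | A` for each `t`, then `Φ_{s_1 ⋯ s_m} | A`. -/
def SatisfiesT2 (M : ℕ) (A : Finset (ZMod M)) : Prop :=
  ∀ (P : Finset ℕ) (e : ℕ → ℕ), P.Nonempty →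
    (∀ p ∈ P, p.Prime ∧ 1 ≤ e p ∧ p ^ e p ∣ M ∧ cycDvd M (p ^ e p) A) →
    cycDvd M (∏ p ∈ P, p ^ e p) A

/-- The `D`-grid through `x` in `ZMod M` : `Λ(x, D) = {y : D ∣ y - x}`. -/
def gridSet (M : ℕ) (x : ZMod M) (D : ℕ) : Set (ZMod M) :=
  {y : ZMod M | (D : ZMod M) ∣ (y - x)}

/-- `S` is fibered in the `p` direction on scale `M`: every element of `S` has its whole
fiber `Λ(s, M/p)` contained in `S`. -/
def Fibered (M p : ℕ) (S : Set (ZMod M)) : Prop :=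
  ∀ s ∈ S, gridSet M s (M / p) ⊆ S

/-- `Div_N(S)` : the set of values `(s - s', N) = gcd(s - s', N)` for `s, s' ∈ S`. -/
def DivSet (M N : ℕ) (S : Set (ZMod M)) : Set ℕ :=
  {m : ℕ | ∃ s ∈ S, ∃ s' ∈ S, Nat.gcd (s - s').val N = m}

/-- `A_m[x] = #{a ∈ A : (x - a, M) = m}`. -/
def boxCount (M : ℕ) (A : Finset (ZMod M)) (x : ZMod M) (m : ℕ) : ℕ :=
  (A.filter fun a => Nat.gcd (x - a).val M = m).card

theorem sdl_F_zero (M g : ℕ) [NeZero M] (A : Finset (ZMod M)) (t : ZMod M)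
    (hg : Nat.gcd t.val M = g) (h : cycDvd M (M / g) A) :
    ∑ a ∈ A, ZMod.stdAddChar (N := M) (t * a) = 0 := by
  have hM : 0 < M := Nat.pos_of_ne_zero (NeZero.ne M)
  have hprim : IsPrimitiveRoot (ZMod.stdAddChar (N := M) 1) M := by
    have h1 : ZMod.stdAddChar (N := M) 1 = Complex.exp (2 * Real.pi * Complex.I / M) := by
      have := ZMod.stdAddChar_coe (N := M) 1
      simpa using this
    rw [h1]
    exact Complex.isPrimitiveRoot_exp M (NeZero.ne M)
  have hpow : ∀ y : ZMod M, ∀ n : ℕ,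
      ZMod.stdAddChar (N := M) y ^ n = ZMod.stdAddChar (N := M) (n • y) := by
    intro y n
    rw [AddChar.map_nsmul_eq_pow]
  have ht : ZMod.stdAddChar (N := M) t = ZMod.stdAddChar (N := M) 1 ^ t.val := by
    rw [hpow]; simp
  have hgM : g ∣ M := hg ▸ Nat.gcd_dvd_right _ _
  have hgt : g ∣ t.val := hg ▸ Nat.gcd_dvd_left _ _
  have hgpos : 0 < g := Nat.pos_of_dvd_of_pos hgM hM
  have hz : IsPrimitiveRoot (ZMod.stdAddChar (N := M) t) (M / g) := by
    obtain ⟨c, hc⟩ := hgt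
    have h1 : IsPrimitiveRoot (ZMod.stdAddChar (N := M) 1 ^ g) (M / g) :=
      hprim.pow hM (Nat.mul_div_cancel' hgM).symm
    rw [ht, hc, pow_mul]
    apply h1.pow_of_coprime
    have := Nat.coprime_div_gcd_div_gcd (m := t.val) (n := M) (by rw [hg]; exact hgpos)
    rw [hg, hc, Nat.mul_div_cancel_left _ hgpos] at this
    exact this
  have hroot : aeval (ZMod.stdAddChar (N := M) t) (cyclotomic (M / g) ℤ) = 0 := by
    have := hz.isRoot_cyclotomic (Nat.div_pos (Nat.le_of_dvd hM hgM) hgpos)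
    rw [IsRoot.def, ← map_cyclotomic_int, eval_map] at this
    simpa [aeval_def] using this
  obtain ⟨q, hq⟩ := h
  have h2 : aeval (ZMod.stdAddChar (N := M) t) (maskPoly M A) = 0 := by
    rw [hq, map_mul, hroot, zero_mul]
  rw [maskPoly, map_sum] at h2
  rw [← h2]
  refine Finset.sum_congr rfl fun a _ => ?_
  rw [map_pow, aeval_X, hpow]
  congr 1
  simp [mul_comm]

theorem sdl_inv (M : ℕ) [NeZero M] (A : Finset (ZMod M)) (x : ZMod M) :
    (M : ℂ) * (if x ∈ A then 1 else 0) =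
      ∑ t : ZMod M, (∑ a ∈ A, ZMod.stdAddChar (N := M) (t * a)) *
        ZMod.stdAddChar (N := M) (t * (-x)) := by
  simp_rw [Finset.sum_mul]
  rw [Finset.sum_comm]
  have : ∀ a ∈ A, ∑ t : ZMod M, ZMod.stdAddChar (N := M) (t * a) *
      ZMod.stdAddChar (N := M) (t * (-x)) = if x = a then (M : ℂ) else 0 := by
    intro a _
    have h := AddChar.sum_mulShift (a - x) (ZMod.isPrimitive_stdAddChar M)
    simp_rw [← AddChar.map_add_eq_mul, ← mul_add, ← sub_eq_add_neg, h, sub_eq_zero,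
      ZMod.card, eq_comm (a := a)]
    split_ifs <;> simp
  rw [Finset.sum_congr rfl this, Finset.sum_ite_eq]
  simp

theorem sdl_cuboid (pi pj pk : ℕ) (hpi : pi.Prime) (hpj : pj.Prime) (hpk : pk.Prime)
    (ni nj nk : ℕ) 
    (M : ℕ) [NeZero M] (hM : M = pi ^ ni * pj ^ nj * pk ^ nk)
    (A : Finset (ZMod M))
    (hPhiM : cycDvd M M A) (hPhiMj : cycDvd M (M / pj) A)
    (x u v w : ZMod M) (hu : pi • u = 0) (hv : (pj ^ 2) • v = 0) (hw : pk • w = 0) :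
    let ind : ZMod M → ℤ := fun y => if y ∈ A then 1 else 0
    ind x - ind (x - u) - ind (x - w) + ind (x - u - w) =
    ind (x - v) - ind (x - u - v) - ind (x - w - v) + ind (x - u - w - v) := by
  intro ind
  have key : ∀ t u : ZMod M, ∀ n : ℕ, n • u = 0 → n ∣ t.val →
      ZMod.stdAddChar (N := M) (t * u) = 1 := by
    rintro t u n hn ⟨c, hc⟩
    have : t * u = 0 := by
      rw [← ZMod.natCast_zmod_val t, hc]
      rw [nsmul_eq_mul] at hn
      push_cast
      rw [mul_right_comm, hn, zero_mul]
    rw [this, AddChar.map_zero_eq_one]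
  set F : ZMod M → ℂ := fun t => ∑ a ∈ A, ZMod.stdAddChar (N := M) (t * a) with hF
  have hvan : ∀ t : ZMod M, F t * ((1 - ZMod.stdAddChar (N := M) (t * u)) *
      (1 - ZMod.stdAddChar (N := M) (t * v)) * (1 - ZMod.stdAddChar (N := M) (t * w))) = 0 := by
    intro t
    by_cases h1 : pi ∣ t.val
    · rw [key t u pi hu h1]; ring
    by_cases h2 : pk ∣ t.val
    · rw [key t w pk hw h2]; ring
    by_cases h3 : pj ^ 2 ∣ t.val
    · rw [key t v _ hv h3]; ring
    have hFt : F t = 0 := by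
      have hg : Nat.gcd t.val M ∣ pj := by
        have c1 : Nat.Coprime (Nat.gcd t.val M) (pi ^ ni) :=
          (((Nat.Prime.coprime_iff_not_dvd hpi).2 h1).symm.coprime_dvd_left
            (Nat.gcd_dvd_left _ _)).pow_right _
        have c2 : Nat.Coprime (Nat.gcd t.val M) (pk ^ nk) :=
          (((Nat.Prime.coprime_iff_not_dvd hpk).2 h2).symm.coprime_dvd_left
            (Nat.gcd_dvd_left _ _)).pow_right _
        have h4 : Nat.gcd t.val M ∣ pj ^ nj := by
          have h5 : Nat.gcd t.val M ∣ pi ^ ni * pj ^ nj * pk ^ nk := by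
            conv_rhs => rw [← hM]
            exact Nat.gcd_dvd_right _ _
          exact c1.dvd_of_dvd_mul_left (c2.dvd_of_dvd_mul_right h5)
        obtain ⟨m, _, hm⟩ := (Nat.dvd_prime_pow hpj).1 h4
        rw [hm]
        have : m < 2 := by
          by_contra hcon
          exact h3 ((pow_dvd_pow pj (not_lt.1 hcon)).trans (hm ▸ Nat.gcd_dvd_left _ _))
        conv_rhs => rw [← pow_one pj]
        exact pow_dvd_pow pj (by omega)
      rcases (Nat.dvd_prime hpj).1 hg with h | h
      · exact sdl_F_zero M 1 A t h (by simpa using hPhiM)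
      · exact sdl_F_zero M pj A t h hPhiMj
    rw [hFt, zero_mul]
  have hMne : (M : ℂ) ≠ 0 := by exact_mod_cast NeZero.ne M
  have hind : ∀ y, (M : ℂ) * (ind y : ℂ) = ∑ t : ZMod M, F t * ZMod.stdAddChar (N := M) (t * (-y)) := by
    intro y
    rw [← sdl_inv]
    simp [ind]
  have hsum : (M : ℂ) * ((ind x - ind (x - u) - ind (x - w) + ind (x - u - w) -
    (ind (x - v) - ind (x - u - v) - ind (x - w - v) + ind (x - u - w - v)) : ℤ) : ℂ) = 0 := by
    push_cast
    simp only [mul_sub, mul_add, hind]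
    simp only [← Finset.sum_sub_distrib, ← Finset.sum_add_distrib]
    apply Finset.sum_eq_zero
    intro t _
    have e : ∀ y z : ZMod M, ZMod.stdAddChar (N := M) (t * (-(y - z))) =
        ZMod.stdAddChar (N := M) (t * (-y)) * ZMod.stdAddChar (N := M) (t * z) := by
      intro y z
      rw [← AddChar.map_add_eq_mul]; congr 1; ring
    simp only [e]
    linear_combination ZMod.stdAddChar (N := M) (t * (-x)) * hvan t
  have := (mul_eq_zero.1 hsum).resolve_left hMne
  exact sub_eq_zero.1 (by exact_mod_cast this)

theorem sdl_gcd_iff (M d : ℕ) [NeZero M] (hd : d ∣ M) (y : ZMod M) :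
    Nat.gcd y.val M = M / d ↔ addOrderOf y = d := by
  have hM : 0 < M := Nat.pos_of_ne_zero (NeZero.ne M)
  have h : addOrderOf y = M / Nat.gcd y.val M := by
    conv_lhs => rw [← ZMod.natCast_zmod_val y]
    rw [ZMod.addOrderOf_coe _ (NeZero.ne M), Nat.gcd_comm]
  rw [h]
  constructor
  · intro h; rw [h]; exact Nat.div_div_self hd hM.ne'
  · intro h; rw [← h]; exact (Nat.div_div_self (Nat.gcd_dvd_right _ _) hM.ne').symm

theorem sdl_nsmul (M d : ℕ) (hd : d ∣ M) (y : ZMod M) (h : ((M / d : ℕ) : ZMod M) ∣ y) :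
    d • y = 0 := by
  obtain ⟨c, rfl⟩ := h
  rw [nsmul_eq_mul, ← mul_assoc, ← Nat.cast_mul, Nat.mul_div_cancel' hd]
  simp

theorem sdl_count (M d : ℕ) [NeZero M] (hd : d ∣ M) (A : Finset (ZMod M)) (x : ZMod M) :
    boxCount M A x (M / d) =
      ((Finset.univ.filter fun v : ZMod M => addOrderOf v = d).filter fun v => x - v ∈ A).card := by
  unfold boxCount
  refine Finset.card_bij' (fun b _ => x - b) (fun v _ => x - v) ?_ ?_ ?_ ?_
  · intro b hb
    simp only [Finset.mem_filter, sdl_gcd_iff M d hd] at hb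
    simp [hb.1, hb.2]
  · intro v hv
    simp only [Finset.mem_filter, Finset.mem_univ, true_and] at hv
    simp [sdl_gcd_iff M d hd, hv.1, hv.2]
  · intros; simp
  · intros; simp

theorem sdl_card (M d : ℕ) [NeZero M] (hd : d ∣ M) :
    (Finset.univ.filter fun v : ZMod M => addOrderOf v = d).card = Nat.totient d :=
  IsAddCyclic.card_addOrderOf_eq_totient (by simpa using hd)

/-- **Size-Divisor Lemma.** -/
theorem statement16
    (pi pj pk : ℕ) (hpi : pi.Prime) (hpj : pj.Prime) (hpk : pk.Prime)
    (hij : pi ≠ pj) (hik : pi ≠ pk) (hjk : pj ≠ pk)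
    (ni nj nk : ℕ) (hni : 1 ≤ ni) (hnj : 2 ≤ nj) (hnk : 1 ≤ nk)
    (M : ℕ) (hM : M = pi ^ ni * pj ^ nj * pk ^ nk)
    (A : Finset (ZMod M))
    (a ai : ZMod M) (ha : a ∈ A) (hai : ai ∈ A)
    (hgcd : Nat.gcd (a - ai).val M = M / pi)
    (hfj : gridSet M a (M / pj) ⊆ (A : Set (ZMod M)))
    (hfk : gridSet M ai (M / pk) ⊆ (A : Set (ZMod M)))
    (hnfk : ¬ gridSet M a (M / pk) ⊆ (A : Set (ZMod M)))
    (hPhiM : cycDvd M M A) (hPhiMj : cycDvd M (M / pj) A) :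
    (∀ ak ∈ A, Nat.gcd (ak - ai).val M = M / pk →
      (∀ a' ∈ A, a' ∈ gridSet M a (M / pk ^ nk) → Nat.gcd (ak - a').val M ≠ M / pi) →
      Nat.totient (pj ^ 2) ≤
        boxCount M A a (M / pj ^ 2) + boxCount M A ak (M / pj ^ 2)) ∧
    (M / pj ^ 2 ∈ DivSet M M (A : Set (ZMod M)) ∧
     M / (pi * pj ^ 2 * pk) ∈ DivSet M M (A : Set (ZMod M)) ∧
     (0 < boxCount M A a (M / pj ^ 2) →
        M / (pi * pj ^ 2) ∈ DivSet M M (A : Set (ZMod M))) ∧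
     (boxCount M A a (M / pj ^ 2) < Nat.totient (pj ^ 2) →
        M / (pj ^ 2 * pk) ∈ DivSet M M (A : Set (ZMod M)))) := by
  have hMpos : M ≠ 0 := by
    rw [hM]; have := hpi.pos; have := hpj.pos; have := hpk.pos; positivity
  have : NeZero M := ⟨hMpos⟩
  have hcij : Nat.Coprime pi (pj ^ 2) := ((Nat.coprime_primes hpi hpj).2 hij).pow_right 2
  have hcik : Nat.Coprime pi pk := (Nat.coprime_primes hpi hpk).2 hik
  have hcjk : Nat.Coprime (pj ^ 2) pk := ((Nat.coprime_primes hpj hpk).2 hjk).pow_left 2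
  have di : pi ∣ pi ^ ni := dvd_pow_self _ (by omega)
  have dj : pj ^ 2 ∣ pj ^ nj := pow_dvd_pow _ hnj
  have dk : pk ∣ pk ^ nk := dvd_pow_self _ (by omega)
  have hdall : pi * pj ^ 2 * pk ∣ M := by
    rw [hM]; exact mul_dvd_mul (mul_dvd_mul di dj) dk
  have hdij : pi * pj ^ 2 ∣ M := (Dvd.intro _ rfl).trans hdall
  have hdi : pi ∣ M := (Dvd.intro _ rfl).trans hdij
  have hdj : pj ^ 2 ∣ M := (Dvd.intro_left _ rfl).trans hdij
  have hdk : pk ∣ M := (Dvd.intro_left _ rfl).trans hdall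
  have hdknk : pk ^ nk ∣ M := by rw [hM]; exact Dvd.intro_left _ rfl
  have hdjk : pj ^ 2 * pk ∣ M := by
    refine Dvd.dvd.trans ?_ hdall
    rw [mul_assoc]; exact Dvd.intro_left _ rfl
  have hu : addOrderOf (a - ai) = pi := (sdl_gcd_iff M pi hdi _).1 hgcd
  -- the order of a sum of elements of coprime orders
  have hadd : ∀ y z : ZMod M, (addOrderOf y).Coprime (addOrderOf z) →
      addOrderOf (y + z) = addOrderOf y * addOrderOf z := fun y z h =>
    (AddCommute.all y z).addOrderOf_add_eq_mul_addOrderOf_of_coprime h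
  -- main dichotomy
  have main : ∀ ak ∈ A, addOrderOf (ak - ai) = pk → a + (ak - ai) ∉ A →
      ∀ v : ZMod M, addOrderOf v = pj ^ 2 → a - v ∈ A ∨ ak - v ∈ A := by
    intro ak hak hk hna v hv
    have h := sdl_cuboid pi pj pk hpi hpj hpk ni nj nk M hM A hPhiM hPhiMj a (a - ai) v (ai - ak)
      (by rw [← hu]; exact addOrderOf_nsmul_eq_zero _)
      (by rw [← hv]; exact addOrderOf_nsmul_eq_zero _)
      (by rw [← hk, ← neg_sub ak ai, ← addOrderOf_neg (ak - ai)]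
          exact addOrderOf_nsmul_eq_zero _)
    have e1 : a - (a - ai) = ai := by ring
    have e2 : a - (ai - ak) = a + (ak - ai) := by ring
    have e3 : ai - (ai - ak) = ak := by ring
    simp only [e1, e2, e3, ha, hai, hak, hna, if_true, if_false] at h
    by_contra hcon
    push Not at hcon
    simp only [hcon.1, hcon.2, if_false] at h
    split_ifs at h <;> omega
  refine ⟨?_, ?_⟩
  · intro ak hak hgk hno
    have hk := (sdl_gcd_iff M pk hdk _).1 hgk
    have hna : a + (ak - ai) ∉ A := by
      intro hmem
      refine hno _ hmem ?_ ?_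
      · show ((M / pk ^ nk : ℕ) : ZMod M) ∣ a + (ak - ai) - a
        rw [add_sub_cancel_left, ← ZMod.natCast_zmod_val (ak - ai)]
        apply Nat.cast_dvd_cast
        refine (Nat.div_dvd_div_left hdknk dk).trans ?_
        rw [← hgk]; exact Nat.gcd_dvd_left _ _
      · rw [sdl_gcd_iff M pi hdi, show ak - (a + (ak - ai)) = -(a - ai) by ring, addOrderOf_neg, hu]
    rw [sdl_count M _ hdj, sdl_count M _ hdj, ← sdl_card M _ hdj]
    refine le_trans (Finset.card_le_card ?_) (Finset.card_union_le _ _)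
    intro v hv
    have hv' := (Finset.mem_filter.1 hv).2
    rw [Finset.mem_union]
    rcases main ak hak hk hna v hv' with h | h
    · exact Or.inl (Finset.mem_filter.2 ⟨hv, h⟩)
    · exact Or.inr (Finset.mem_filter.2 ⟨hv, h⟩)
  · obtain ⟨b, hb, hbA⟩ := Set.not_subset.1 hnfk
    have hb' : ((M / pk : ℕ) : ZMod M) ∣ b - a := hb
    have hbA' : b ∉ A := hbA
    have hk : addOrderOf (b - a) = pk := by
      have h1 : addOrderOf (b - a) ∣ pk := addOrderOf_dvd_of_nsmul_eq_zero (sdl_nsmul M pk hdk _ hb')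
      rcases (Nat.dvd_prime hpk).1 h1 with h | h
      · rw [AddMonoid.addOrderOf_eq_one_iff, sub_eq_zero] at h
        exact absurd (h ▸ ha) hbA'
      · exact h
    obtain ⟨ak, rfl⟩ : ∃ ak, b = a + (ak - ai) := ⟨b - a + ai, by ring⟩
    rw [add_sub_cancel_left] at hk hb'
    have hak : ak ∈ A := hfk hb'
    have hm := main ak hak hk hbA'
    have hdiv : ∀ d, d ∣ M → ∀ s ∈ A, ∀ s' ∈ A, addOrderOf (s - s') = d →
        M / d ∈ DivSet M M (A : Set (ZMod M)) := fun d hd s hs s' hs' h =>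
      ⟨s, hs, s', hs', (sdl_gcd_iff M d hd _).2 h⟩
    have hcard := sdl_card M _ hdj
    have h3 : ∀ v : ZMod M, addOrderOf v = pj ^ 2 →
        addOrderOf ((a - ai) + v + (ai - ak)) = pi * pj ^ 2 * pk := by
      intro v hv
      have h1 : addOrderOf ((a - ai) + v) = pi * pj ^ 2 := by
        rw [hadd _ _ (by rw [hu, hv]; exact hcij), hu, hv]
      have hk' : addOrderOf (ai - ak) = pk := by rw [← neg_sub, addOrderOf_neg, hk]
      rw [hadd _ _ (by rw [h1, hk']; exact Nat.Coprime.mul_left hcik hcjk), h1, hk']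
    obtain ⟨v, hv⟩ : ∃ v : ZMod M, addOrderOf v = pj ^ 2 := by
      have : 0 < (Finset.univ.filter fun v : ZMod M => addOrderOf v = pj ^ 2).card := by
        rw [hcard]; exact Nat.totient_pos.2 (pow_pos hpj.pos 2)
      obtain ⟨v, hv⟩ := Finset.card_pos.1 this
      exact ⟨v, (Finset.mem_filter.1 hv).2⟩
    refine ⟨?_, ?_, ?_, ?_⟩
    · rcases hm v hv with h | h
      · exact hdiv _ hdj _ ha _ h (by rw [sub_sub_cancel, hv])
      · exact hdiv _ hdj _ hak _ h (by rw [sub_sub_cancel, hv])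
    · rcases hm v hv with h | h
      · refine hdiv _ hdall _ h _ hak ?_
        rw [← h3 (-v) (by rw [addOrderOf_neg, hv])]
        congr 1; ring
      · refine hdiv _ hdall _ ha _ h ?_
        rw [← h3 v hv]
        congr 1; ring
    · intro hpos
      rw [sdl_count M _ hdj] at hpos
      obtain ⟨z, hz⟩ := Finset.card_pos.1 hpos
      simp only [Finset.mem_filter, Finset.mem_univ, true_and] at hz
      refine hdiv _ hdij _ hz.2 _ hai ?_
      have hz' : addOrderOf (-z) = pj ^ 2 := by rw [addOrderOf_neg, hz.1]
      rw [show a - z - ai = (a - ai) + -z by ring, hadd _ _ (by rw [hu, hz']; exact hcij), hu, hz']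
    · intro hlt
      rw [sdl_count M _ hdj, ← hcard] at hlt
      obtain ⟨z, hz, hzn⟩ : ∃ z : ZMod M, addOrderOf z = pj ^ 2 ∧ a - z ∉ A := by
        by_contra hcon
        push Not at hcon
        refine absurd hlt (not_lt.2 (Finset.card_le_card ?_))
        intro z hz
        exact Finset.mem_filter.2 ⟨hz, hcon z (Finset.mem_filter.1 hz).2⟩
      have hz2 := (hm z hz).resolve_left hzn
      refine hdiv _ hdjk _ hz2 _ hai ?_
      have hz' : addOrderOf (-z) = pj ^ 2 := by rw [addOrderOf_neg, hz]
      rw [show ak - z - ai = -z + (ak - ai) by ring, hadd _ _ (by rw [hk, hz']; exact hcjk), hk, hz']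
end

section
/- Let M = p_i^{n_i} p_j^{n_j} p_k^{n_k} with p_i, p_j, p_k distinct primes and n_j, n_k ≥ 2. Assume A ⊕ B = ℤ_M, |A| = p_i p_j p_k, Φ_M | A, and that A ∩ Λ contains a p_i extended corner for some D(M)-grid Λ. Then Φ_{M/p_j} and Φ_{M/p_k} do not both divide A. -/
open Polynomial

/-- `A ∩ Λ` contains a `p` extended corner (other two directions `q`, `r`). -/
def ExtCorner (M p q r : ℕ) (A Lam : Set (ZMod M)) : Prop :=
  ∃ a ∈ A ∩ Lam, ∃ a' ∈ A ∩ Lam,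
    Nat.gcd (a - a').val M = M / p ∧
    Fibered M q (A ∩ gridSet M a (M / (q * r))) ∧
    ¬ Fibered M r (A ∩ gridSet M a (M / (q * r))) ∧
    Fibered M r (A ∩ gridSet M a' (M / (q * r))) ∧
    ¬ Fibered M q (A ∩ gridSet M a' (M / (q * r)))

lemma cyc_relprime {a b : ℕ} (ha : 0 < a) (hb : 0 < b) (hab : a ≠ b) :
    IsRelPrime (cyclotomic a ℤ) (cyclotomic b ℤ) := by
  rw [(cyclotomic.irreducible ha).isRelPrime_iff_not_dvd]
  intro h
  have h2 := (cyclotomic.irreducible ha).associated_of_dvd (cyclotomic.irreducible hb) h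
  exact hab (cyclotomic_injective
    (eq_of_monic_of_associated (cyclotomic.monic a ℤ) (cyclotomic.monic b ℤ) h2))

/-- Sum of the coefficients in the residue class `y` modulo `N`. -/
noncomputable def resSum (N : ℕ) (y : ZMod N) : ℤ[X] →ₗ[ℤ] ℤ :=
  Polynomial.lsum (fun n => if (n : ZMod N) = y then LinearMap.id else 0)

lemma resSum_X_pow (N : ℕ) (y : ZMod N) (n : ℕ) :
    resSum N y (X ^ n) = if (n : ZMod N) = y then 1 else 0 := by
  rw [resSum, Polynomial.lsum_apply, X_pow_eq_monomial, Polynomial.sum_monomial_index]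
  · split_ifs <;> simp
  · simp

lemma resSum_mul_eq_zero (N : ℕ) (y : ZMod N) (q : ℤ[X]) :
    resSum N y ((X ^ N - 1) * q) = 0 := by
  induction q using Polynomial.induction_on' with
  | add p q hp hq => rw [mul_add, map_add, hp, hq, add_zero]
  | monomial n c =>
    have : (X ^ N - 1) * monomial n c = c • ((X : ℤ[X]) ^ (N + n) - X ^ n) := by
      rw [← C_mul_X_pow_eq_monomial, smul_eq_C_mul]; ring
    rw [this, map_smul, map_sub, resSum_X_pow, resSum_X_pow]
    simp

open Classical in
/-- Number of elements of `A` congruent to `y` modulo `N`. -/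
noncomputable def resCount (M N : ℕ) (A : Finset (ZMod M)) (y : ZMod M) : ℤ :=
  ∑ a ∈ A, if (N : ZMod M) ∣ a - y then 1 else 0

open Classical in
lemma resCount_eq_card (M N : ℕ) (A : Finset (ZMod M)) (y : ZMod M) :
    resCount M N A y = ((A.filter fun a => (N : ZMod M) ∣ a - y).card : ℤ) := by
  rw [resCount, Finset.sum_boole]

lemma dvd_val {M s : ℕ} [NeZero M] (hs : s ∣ M) {g : ZMod M} (h : (s : ZMod M) ∣ g) :
    s ∣ g.val := by
  obtain ⟨t, rfl⟩ := h
  rw [ZMod.val_mul, ZMod.val_natCast]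
  rw [Nat.dvd_mod_iff hs]
  exact Dvd.dvd.mul_right ((Nat.dvd_mod_iff hs).2 dvd_rfl) _

lemma dvd_of_val {M s : ℕ} [NeZero M] {g : ZMod M} (h : s ∣ g.val) : (s : ZMod M) ∣ g := by
  obtain ⟨t, ht⟩ := h
  refine ⟨(t : ZMod M), ?_⟩
  rw [← Nat.cast_mul, ← ht, ZMod.natCast_zmod_val]

lemma cast_eq_iff {M N : ℕ} [NeZero M] (hN : N ∣ M) (a b : ZMod M) :
    (ZMod.castHom hN (ZMod N) a = ZMod.castHom hN (ZMod N) b) ↔ (N : ZMod M) ∣ a - b := by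
  rw [← sub_eq_zero, ← map_sub]
  constructor
  · intro h
    apply dvd_of_val
    rw [ZMod.castHom_apply, ← ZMod.natCast_val, ZMod.natCast_eq_zero_iff] at h
    exact h
  · rintro ⟨t, ht⟩
    rw [ht, map_mul, map_natCast]
    simp

lemma resSum_mask (M N : ℕ) [NeZero M] (hN : N ∣ M) (A : Finset (ZMod M)) (y g : ZMod M)
    (m : ℕ) (hm : (m : ZMod M) = g) :
    resSum N (ZMod.castHom hN (ZMod N) y) (maskPoly M A * X ^ m) = resCount M N A (y - g) := by
  rw [maskPoly, Finset.sum_mul, map_sum, resCount]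
  apply Finset.sum_congr rfl
  intro a _
  rw [← pow_add, resSum_X_pow]
  have : ((a.val + m : ℕ) : ZMod N) = ZMod.castHom hN (ZMod N) (a + g) := by
    rw [map_add, ← hm, map_natCast, Nat.cast_add, ZMod.castHom_apply, ZMod.natCast_val]
  rw [this]
  have h2 := cast_eq_iff hN (a + g) y
  have h3 : a + g - y = a - (y - g) := by ring
  rw [h3] at h2
  by_cases h : (N : ZMod M) ∣ a - (y - g)
  · rw [if_pos (h2.2 h), if_pos h]
  · rw [if_neg (fun h' => h (h2.1 h')), if_neg h]

lemma cyc_dvd_val {M s : ℕ} [NeZero M] (hsM : s ∣ M) (g : ZMod M) (hg : (s : ZMod M) ∣ g) :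
    cyclotomic s ℤ ∣ X ^ g.val - 1 := by
  obtain ⟨t, ht⟩ := dvd_val hsM hg
  rw [ht, pow_mul]
  exact (cyclotomic.dvd_X_pow_sub_one s ℤ).trans
    (by simpa using sub_dvd_pow_sub_pow ((X : ℤ[X]) ^ s) 1 t)

lemma resSum_zero (M N : ℕ) [NeZero M] (hN : N ∣ M) (A : Finset (ZMod M)) (hc : cycDvd M N A)
    (Q : ℤ[X]) (hQ : ∀ s, s ∣ N → s ≠ N → cyclotomic s ℤ ∣ Q) (y : ZMod N) :
    resSum N y (maskPoly M A * Q) = 0 := by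
  have M0 : 0 < M := Nat.pos_of_ne_zero (NeZero.ne M)
  have N0 : 0 < N := Nat.pos_of_dvd_of_pos hN M0
  have hX : (X ^ N - 1 : ℤ[X]) ∣ maskPoly M A * Q := by
    rw [← prod_cyclotomic_eq_X_pow_sub_one N0]
    apply Finset.prod_dvd_of_isRelPrime
    · intro a ha b hb hab
      exact cyc_relprime (Nat.pos_of_mem_divisors ha) (Nat.pos_of_mem_divisors hb) hab
    · intro s hs
      have hsN := Nat.dvd_of_mem_divisors hs
      by_cases h : s = N
      · subst h
        exact Dvd.dvd.mul_right hc _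
      · exact Dvd.dvd.mul_left (hQ s hsN h) _
  obtain ⟨q, hq⟩ := hX
  rw [hq]
  exact resSum_mul_eq_zero N y q

/-- The cuboid condition. -/
lemma cuboid (M N : ℕ) [NeZero M] (hN : N ∣ M) (A : Finset (ZMod M)) (hc : cycDvd M N A)
    (g1 g2 g3 : ZMod M)
    (hg : ∀ s, s ∣ N → s ≠ N → (s : ZMod M) ∣ g1 ∨ (s : ZMod M) ∣ g2 ∨ (s : ZMod M) ∣ g3)
    (y : ZMod M) :
    resCount M N A (y + g1 + g2 + g3) - resCount M N A (y + g2 + g3) - resCount M N A (y + g1 + g3)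
    - resCount M N A (y + g1 + g2) + resCount M N A (y + g1) + resCount M N A (y + g2)
    + resCount M N A (y + g3) - resCount M N A y = 0 := by
  have h0 := resSum_zero M N hN A hc
    ((X ^ g1.val - 1) * (X ^ g2.val - 1) * (X ^ g3.val - 1)) (by
      intro s hsN h
      have hsM := hsN.trans hN
      rcases hg s hsN h with h | h | h
      · exact Dvd.dvd.mul_right (Dvd.dvd.mul_right (cyc_dvd_val hsM _ h) _) _
      · exact Dvd.dvd.mul_right (Dvd.dvd.mul_left (cyc_dvd_val hsM _ h) _) _
      · exact Dvd.dvd.mul_left (cyc_dvd_val hsM _ h) _)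
    (ZMod.castHom hN (ZMod N) (y + g1 + g2 + g3))
  have expand : maskPoly M A * ((X ^ g1.val - 1) * (X ^ g2.val - 1) * (X ^ g3.val - 1)) =
      maskPoly M A * X ^ (g1.val + g2.val + g3.val) - maskPoly M A * X ^ (g1.val + g2.val)
      - maskPoly M A * X ^ (g1.val + g3.val) - maskPoly M A * X ^ (g2.val + g3.val)
      + maskPoly M A * X ^ g1.val + maskPoly M A * X ^ g2.val + maskPoly M A * X ^ g3.val
      - maskPoly M A * X ^ 0 := by ring
  rw [expand] at h0
  simp only [map_sub, map_add] at h0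
  simp only [← map_add] at h0
  rw [resSum_mask M N hN A _ (g1 + g2 + g3) _ (by simp),
    resSum_mask M N hN A _ (g1 + g2) (g1.val + g2.val) (by simp),
    resSum_mask M N hN A _ (g1 + g3) (g1.val + g3.val) (by simp),
    resSum_mask M N hN A _ (g2 + g3) (g2.val + g3.val) (by simp),
    resSum_mask M N hN A _ g1 g1.val (by simp),
    resSum_mask M N hN A _ g2 g2.val (by simp),
    resSum_mask M N hN A _ g3 g3.val (by simp),
    resSum_mask M N hN A _ 0 0 (by simp)] at h0
  have e1 : y + g1 + g2 + g3 - (g1 + g2 + g3) = y := by ring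
  have e2 : y + g1 + g2 + g3 - (g1 + g2) = y + g3 := by ring
  have e3 : y + g1 + g2 + g3 - (g1 + g3) = y + g2 := by ring
  have e4 : y + g1 + g2 + g3 - (g2 + g3) = y + g1 := by ring
  have e5 : y + g1 + g2 + g3 - g1 = y + g2 + g3 := by ring
  have e6 : y + g1 + g2 + g3 - g2 = y + g1 + g3 := by ring
  have e7 : y + g1 + g2 + g3 - g3 = y + g1 + g2 := by ring
  rw [e1, e2, e3, e4, e5, e6, e7, sub_zero] at h0
  linarith

open Classical in
lemma sum_ite_le_one (s : Finset ℕ) (P : ℕ → Prop)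
    (h : ∀ t ∈ s, ∀ t' ∈ s, P t → P t' → t = t') : ∑ x ∈ s, (if P x then (1 : ℤ) else 0) ≤ 1 := by
  rw [Finset.sum_boole]
  norm_cast
  rw [Finset.card_le_one]
  intro t ht t' ht'
  rw [Finset.mem_filter] at ht ht'
  exact h t ht.1 t' ht'.1 ht.2 ht'.2

/-- A single-prime consequence: equidistribution. -/
lemma class_bound (M p k : ℕ) [NeZero M] (hp : p.Prime) (hk : p ^ (k + 1) ∣ M)
    (A : Finset (ZMod M)) (hc : cycDvd M (p ^ (k + 1)) A) (y : ZMod M) :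
    p * resCount M (p ^ (k + 1)) A y ≤ A.card := by
  classical
  have step : ∀ t : ℕ, resCount M (p ^ (k + 1)) A (y + t * (p : ZMod M) ^ k) =
      resCount M (p ^ (k + 1)) A y := by
    intro t
    set g : ZMod M := t * (p : ZMod M) ^ k with hgdef
    have h0 := resSum_zero M _ hk A hc (X ^ g.val - 1) (by
      intro s hs hne
      apply cyc_dvd_val (hs.trans hk)
      obtain ⟨j, hj, rfl⟩ := (Nat.dvd_prime_pow hp).1 hs
      have : j ≤ k := by
        by_contra h
        exact hne (by rw [show j = k + 1 by omega])
      push_cast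
      exact Dvd.dvd.mul_left (pow_dvd_pow _ this) _)
      (ZMod.castHom hk (ZMod (p ^ (k + 1))) (y + g))
    have expand : maskPoly M A * (X ^ g.val - 1) = maskPoly M A * X ^ g.val - maskPoly M A * X ^ 0 := by
      ring
    rw [expand, map_sub, resSum_mask M _ hk A _ g g.val (by simp),
      resSum_mask M _ hk A _ 0 0 (by simp), add_sub_cancel_right, sub_zero] at h0
    linarith
  have hsum : ∑ t ∈ Finset.range p, resCount M (p ^ (k + 1)) A (y + t * (p : ZMod M) ^ k) =
      p * resCount M (p ^ (k + 1)) A y := by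
    rw [Finset.sum_congr rfl (fun t _ => step t)]; simp
  rw [← hsum]
  unfold resCount
  rw [Finset.sum_comm]
  calc _ ≤ ∑ a ∈ A, (1 : ℤ) := by
        apply Finset.sum_le_sum
        intro a _
        refine sum_ite_le_one (Finset.range p)
          (fun x : ℕ => ((p ^ (k + 1) : ℕ) : ZMod M) ∣ a - (y + (x : ZMod M) * (p : ZMod M) ^ k)) ?_
        intro t ht t' ht' hd hd'
        rw [Finset.mem_range] at ht ht'
        have h := dvd_sub hd' hd
        have h' : (a - (y + t' * (p : ZMod M) ^ k)) - (a - (y + t * (p : ZMod M) ^ k)) =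
          ((((t : ℤ) - t') * p ^ k : ℤ) : ZMod M) := by push_cast; ring
        have h1 : ((p ^ (k + 1) : ℕ) : ZMod M) ∣ (((t : ℤ) - t') * p ^ k : ℤ) := by
          rw [← h']; exact_mod_cast h
        have h2 := (cast_eq_iff hk ((((t : ℤ) - t') * p ^ k : ℤ) : ZMod M) 0).2 (by simpa using h1)
        rw [map_intCast, map_zero, ZMod.intCast_zmod_eq_zero_iff_dvd] at h2
        push_cast at h2
        rw [pow_succ, mul_comm] at h2
        have h3 := Int.dvd_of_mul_dvd_mul_right (pow_ne_zero k (by exact_mod_cast hp.ne_zero)) h2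
        obtain ⟨r, hr⟩ := h3
        have hp0 : (0 : ℤ) < p := by exact_mod_cast hp.pos
        have hr1 : r < 1 := by nlinarith
        have hr2 : -1 < r := by nlinarith
        have : r = 0 := by omega
        subst this
        omega
    _ = A.card := by simp

lemma tiling_card (M : ℕ) [NeZero M] (A B : Finset (ZMod M))
    (h : IsTiling M (A : Set (ZMod M)) (B : Set (ZMod M))) {R : Type*} [AddCommMonoid R]
    (f : ZMod M → R) : ∑ a ∈ A, ∑ b ∈ B, f (a + b) = ∑ z, f z := by
  rw [← Finset.sum_product']
  apply Finset.sum_bij (fun ab _ => ab.1 + ab.2)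
  · simp
  · intro x hx y hy hxy
    rw [Finset.mem_product] at hx hy
    obtain ⟨w, _, hw⟩ := h (x.1 + x.2)
    rw [hw x ⟨hx.1, hx.2, rfl⟩, hw y ⟨hy.1, hy.2, hxy.symm⟩]
  · intro z _
    obtain ⟨w, hw, _⟩ := h z
    exact ⟨w, Finset.mem_product.2 ⟨hw.1, hw.2.1⟩, hw.2.2⟩
  · simp

lemma tiling_cyc (M : ℕ) [NeZero M] (A B : Finset (ZMod M))
    (h : IsTiling M (A : Set (ZMod M)) (B : Set (ZMod M))) (s : ℕ) (hs : s ∣ M) (hs1 : 1 < s) :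
    cycDvd M s A ∨ cycDvd M s B := by
  have hζ := Complex.isPrimitiveRoot_exp s (by omega)
  set ζ := Complex.exp (2 * Real.pi * Complex.I / s) with hζdef
  have hζM : ζ ^ M = 1 := by
    obtain ⟨t, rfl⟩ := hs
    rw [pow_mul, hζ.pow_eq_one, one_pow]
  have key : ∀ C : Finset (ZMod M), aeval ζ (maskPoly M C) = 0 → cycDvd M s C := by
    intro C hC
    rw [cycDvd, cyclotomic_eq_minpoly hζ (by omega)]
    exact minpoly.isIntegrallyClosed_dvd (hζ.isIntegral (by omega)) hC
  have ev : ∀ C : Finset (ZMod M), aeval ζ (maskPoly M C) = ∑ a ∈ C, ζ ^ a.val := by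
    intro C; simp [maskPoly]
  have hprod : aeval ζ (maskPoly M A) * aeval ζ (maskPoly M B) = 0 := by
    rw [ev, ev, Finset.sum_mul_sum]
    have : ∀ a b : ZMod M, ζ ^ a.val * ζ ^ b.val = ζ ^ (a + b).val := by
      intro a b
      rw [← pow_add, ZMod.val_add]
      exact pow_eq_pow_mod _ hζM
    simp_rw [this]
    rw [tiling_card M A B h (fun z => ζ ^ z.val)]
    have e : ∑ z : ZMod M, ζ ^ z.val = ∑ i ∈ Finset.range M, ζ ^ i := by
      apply Finset.sum_bij (fun z _ => z.val)
      · intro z _; exact Finset.mem_range.2 (ZMod.val_lt z)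
      · intro a _ b _ hab; exact ZMod.val_injective M hab
      · intro i hi
        exact ⟨(i : ZMod M), Finset.mem_univ _, ZMod.val_cast_of_lt (Finset.mem_range.1 hi)⟩
      · simp
    rw [e]
    have h1 : ζ - 1 ≠ 0 := sub_ne_zero.2 (hζ.ne_one hs1)
    have h2 := geom_sum_mul ζ M
    rw [hζM, sub_self] at h2
    exact (mul_eq_zero.1 h2).resolve_right h1
  rcases mul_eq_zero.1 hprod with h | h
  · exact Or.inl (key A h)
  · exact Or.inr (key B h)

lemma exists_alpha (M p n : ℕ) [NeZero M] (hp : p.Prime) (hn : p ^ n ∣ M) (A B : Finset (ZMod M))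
    (h : IsTiling M (A : Set (ZMod M)) (B : Set (ZMod M))) (hB : ¬ p ^ n ∣ B.card) :
    ∃ k < n, cycDvd M (p ^ (k + 1)) A := by
  by_contra hcon
  push Not at hcon
  apply hB
  have : Fact p.Prime := ⟨hp⟩
  have hd : ∏ k ∈ Finset.range n, cyclotomic (p ^ (k + 1)) ℤ ∣ maskPoly M B := by
    apply Finset.prod_dvd_of_isRelPrime
    · intro a _ b _ hab
      apply cyc_relprime (pow_pos hp.pos _) (pow_pos hp.pos _)
      intro h
      have := Nat.pow_right_injective hp.two_le h
      omega
    · intro k hk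
      have hk := Finset.mem_range.1 hk
      exact (tiling_cyc M A B h _ ((pow_dvd_pow p (by omega)).trans hn)
        (Nat.one_lt_pow (by omega) hp.one_lt)).resolve_left (hcon k hk)
  have h2 := eval_dvd (x := 1) hd
  rw [eval_prod] at h2
  simp only [eval_one_cyclotomic_prime_pow] at h2
  simp [maskPoly, eval_finsetSum] at h2
  exact_mod_cast h2

/-- Arithmetic contradiction, case `u < v`. -/
lemma arith_lt (u v s c E E' : ℤ) (hu : 2 ≤ u) (huv : u < v) (hne : v = u + 1 → u = 2)
    (hs : 1 ≤ s) (hsv : s < v) (hc : 1 ≤ c) (hcu : c < u)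
    (hE : 0 ≤ E) (hEu : E ≤ u * (u - 1))
    (h0 : u * s + s * (u * (u - 1) - E) + (u - c) * E' ≤ u * v)
    (h1 : v * c + (v - s) * E + c * (v * (v - 1) - E') ≤ u * v) : False := by
  have k0 : u * s + (u - c) * E' ≤ u * v := by
    nlinarith [mul_nonneg (by linarith : (0:ℤ) ≤ s) (by linarith : 0 ≤ u * (u - 1) - E)]
  have k1 : c * v ^ 2 - c * E' ≤ u * v := by
    nlinarith [mul_nonneg (by linarith : (0:ℤ) ≤ v - s) hE]
  have k2 : c * (u - c) * v ^ 2 + c * u * s ≤ u ^ 2 * v := by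
    nlinarith [mul_le_mul_of_nonneg_left k0 (by linarith : (0:ℤ) ≤ c),
      mul_le_mul_of_nonneg_left k1 (by linarith : (0:ℤ) ≤ u - c)]
  have k3 : u - 1 ≤ c * (u - c) := by nlinarith
  have k4 : (u - 1) * v ^ 2 + u * s ≤ u ^ 2 * v := by
    have a1 : (u - 1) * v ^ 2 ≤ c * (u - c) * v ^ 2 :=
      mul_le_mul_of_nonneg_right k3 (by positivity)
    have a2 : u * s ≤ c * u * s := by
      have : 0 ≤ (c - 1) * (u * s) :=
        mul_nonneg (by linarith) (mul_nonneg (by linarith) (by linarith))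
      linarith [this]
    linarith
  have k5 : (u - 1) * v < u ^ 2 := by
    have : 0 < u * s := by positivity
    by_contra hcon
    push Not at hcon
    nlinarith [mul_le_mul_of_nonneg_right hcon (by linarith : (0:ℤ) ≤ v)]
  have k6 : v = u + 1 := by
    by_contra hcon
    have : u + 2 ≤ v := by omega
    nlinarith [mul_le_mul_of_nonneg_left this (by linarith : (0:ℤ) ≤ u - 1)]
  have k7 := hne k6
  subst k7
  subst k6
  have : c = 1 := by omega
  subst this
  have : s = 1 := by
    norm_num at k4
    omega
  subst this
  norm_num at h0 h1
  linarith

lemma arith (u v : ℕ) (pu : u.Prime) (pv : v.Prime) (huv : u ≠ v) (s c E E' : ℤ)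
    (hs : 1 ≤ s) (hsv : s < v) (hc : 1 ≤ c) (hcu : c < u)
    (hE : 0 ≤ E) (hE' : 0 ≤ E') (hEu : E ≤ u * (u - 1)) (hEv : E' ≤ v * (v - 1))
    (h0 : u * s + s * (u * (u - 1) - E) + (u - c) * E' ≤ u * v)
    (h1 : v * c + (v - s) * E + c * (v * (v - 1) - E') ≤ u * v) : False := by
  have key : ∀ a b : ℕ, a.Prime → b.Prime → (b : ℤ) = a + 1 → (a : ℤ) = 2 := by
    intro a b ha hb h
    have h' : b = a + 1 := by omega
    subst h'
    rcases ha.eq_two_or_odd with h | h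
    · simp [h]
    · rcases hb.eq_two_or_odd with h2 | h2
      · have := ha.two_le; omega
      · omega
  have u2 := pu.two_le
  have v2 := pv.two_le
  rcases lt_or_gt_of_ne huv with h | h
  · exact arith_lt u v s c E E' (by omega) (by omega) (key u v pu pv) hs hsv hc hcu hE hEu
      h0 h1
  · exact arith_lt v u c s E' E (by omega) (by omega) (key v u pv pu) hc hcu hs hsv hE' hEv
      (by linarith) (by linarith)

/-- One layer estimate. -/
lemma layer (u : ℤ) (v : ℕ) (S : Finset ℕ) (hS : S ⊆ Finset.range v) (hne : S.Nonempty)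
    (hlt : S.card < v) (F0 F1 : ℕ → ℤ)
    (b0 : ∀ y < v, 0 ≤ F0 y ∧ F0 y ≤ u) (b1 : ∀ y < v, 0 ≤ F1 y ∧ F1 y ≤ u)
    (hF : ∀ y < v, ∀ y' < v, y ∈ S → y' ∉ S → F0 y - F1 y - F0 y' + F1 y' = u) :
    ∃ e : ℤ, 0 ≤ e ∧ e ≤ u ∧ (S.card : ℤ) * (u - e) ≤ ∑ y ∈ Finset.range v, F0 y ∧
      ((v : ℤ) - S.card) * e ≤ ∑ y ∈ Finset.range v, F1 y := by
  obtain ⟨y1, hy1⟩ := hne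
  have : ∃ y0 ∈ Finset.range v, y0 ∉ S := by
    by_contra hcon
    push Not at hcon
    have := Finset.card_le_card (show Finset.range v ⊆ S from hcon)
    simp at this
    omega
  obtain ⟨y0, hy0, hy0S⟩ := this
  have l1 : y1 < v := Finset.mem_range.1 (hS hy1)
  have l0 : y0 < v := Finset.mem_range.1 hy0
  refine ⟨F1 y0 - F0 y0, ?_, ?_, ?_, ?_⟩
  · have := hF y1 l1 y0 l0 hy1 hy0S
    linarith [(b0 y1 l1).2, (b1 y1 l1).1]
  · linarith [(b1 y0 l0).2, (b0 y0 l0).1]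
  · calc (S.card : ℤ) * (u - (F1 y0 - F0 y0)) = ∑ y ∈ S, (u - (F1 y0 - F0 y0)) := by
          rw [Finset.sum_const, nsmul_eq_mul]
      _ ≤ ∑ y ∈ S, F0 y := by
        apply Finset.sum_le_sum
        intro y hy
        have l := Finset.mem_range.1 (hS hy)
        linarith [hF y l y0 l0 hy hy0S, (b1 y l).1]
      _ ≤ _ := Finset.sum_le_sum_of_subset_of_nonneg hS
        (fun y hy _ => (b0 y (Finset.mem_range.1 hy)).1)
  · have hcard : ((Finset.range v \ S).card : ℤ) = v - S.card := by
      rw [Finset.card_sdiff_of_subset hS]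
      simp
      omega
    calc ((v : ℤ) - S.card) * (F1 y0 - F0 y0) = ∑ y ∈ Finset.range v \ S, (F1 y0 - F0 y0) := by
          rw [← hcard, Finset.sum_const, nsmul_eq_mul]
      _ ≤ ∑ y ∈ Finset.range v \ S, F1 y := by
        apply Finset.sum_le_sum
        intro y hy
        rw [Finset.mem_sdiff] at hy
        have l := Finset.mem_range.1 hy.1
        linarith [hF y1 l1 y0 l0 hy1 hy0S, hF y1 l1 y l hy1 hy.2, (b0 y l).1]
      _ ≤ _ := Finset.sum_le_sum_of_subset_of_nonneg Finset.sdiff_subset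
        (fun y hy _ => (b1 y (Finset.mem_range.1 hy)).1)

lemma sum_split (u v : ℕ) (hu : 1 ≤ u) (hv : 1 ≤ v) (f : ℕ → ℕ → ℕ → ℕ → ℤ)
    (hf : ∀ z x w y, 0 ≤ f z x w y) :
    (∑ y ∈ Finset.range v, ∑ x ∈ Finset.range u, f 0 x 0 y)
    + (∑ z ∈ Finset.Ico 1 u, ∑ y ∈ Finset.range v, ∑ x ∈ Finset.range u, f z x 0 y)
    + (∑ w ∈ Finset.Ico 1 v, ∑ x ∈ Finset.range u, ∑ y ∈ Finset.range v, f 0 x w y)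
    ≤ ∑ z ∈ Finset.range u, ∑ w ∈ Finset.range v, ∑ x ∈ Finset.range u, ∑ y ∈ Finset.range v,
      f z x w y := by
  set g : ℕ → ℕ → ℤ := fun z w => ∑ x ∈ Finset.range u, ∑ y ∈ Finset.range v, f z x w y with hg
  have hg0 : ∀ z w, 0 ≤ g z w := fun z w =>
    Finset.sum_nonneg fun _ _ => Finset.sum_nonneg fun _ _ => hf _ _ _ _
  have e1 : ∀ z, ∑ y ∈ Finset.range v, ∑ x ∈ Finset.range u, f z x 0 y = g z 0 := by
    intro z; rw [Finset.sum_comm]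
  simp_rw [e1]
  change g 0 0 + (∑ z ∈ Finset.Ico 1 u, g z 0) + (∑ w ∈ Finset.Ico 1 v, g 0 w) ≤
    ∑ z ∈ Finset.range u, ∑ w ∈ Finset.range v, g z w
  have s1 : ∀ (n : ℕ) (h : ℕ → ℤ), 1 ≤ n →
      ∑ z ∈ Finset.range n, h z = h 0 + ∑ z ∈ Finset.Ico 1 n, h z := by
    intro n h hn
    rw [Finset.range_eq_Ico, Finset.sum_eq_sum_Ico_succ_bot (by omega)]
  rw [s1 u _ hu, s1 v (g 0) hv]
  have : ∑ z ∈ Finset.Ico 1 u, g z 0 ≤ ∑ z ∈ Finset.Ico 1 u, ∑ w ∈ Finset.range v, g z w := by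
    apply Finset.sum_le_sum
    intro z _
    exact Finset.single_le_sum (f := g z) (fun w _ => hg0 z w) (Finset.mem_range.2 (by omega))
  linarith

lemma combi (u v : ℕ) (pu : u.Prime) (pv : v.Prime) (huv : u ≠ v)
    (f0 f1 : ℕ → ℕ → ℕ → ℕ → ℤ)
    (b0 : ∀ z x w y, 0 ≤ f0 z x w y ∧ f0 z x w y ≤ 1)
    (b1 : ∀ z x w y, 0 ≤ f1 z x w y ∧ f1 z x w y ≤ 1)
    (t0 : ∑ z ∈ Finset.range u, ∑ w ∈ Finset.range v, ∑ x ∈ Finset.range u, ∑ y ∈ Finset.range v,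
      f0 z x w y ≤ u * v)
    (t1 : ∑ z ∈ Finset.range u, ∑ w ∈ Finset.range v, ∑ x ∈ Finset.range u, ∑ y ∈ Finset.range v,
      f1 z x w y ≤ u * v)
    (S T : Finset ℕ) (hS : S ⊆ Finset.range v) (hSne : S.Nonempty) (hSlt : S.card < v)
    (hT : T ⊆ Finset.range u) (hTne : T.Nonempty) (hTlt : T.card < u)
    (hf0 : ∀ x < u, ∀ y < v, f0 0 x 0 y = if y ∈ S then 1 else 0)
    (hf1 : ∀ x < u, ∀ y < v, f1 0 x 0 y = if x ∈ T then 1 else 0)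
    (cubj : ∀ z < u, ∀ y < v, ∀ y' < v,
      (∑ x ∈ Finset.range u, f0 z x 0 y) - (∑ x ∈ Finset.range u, f1 z x 0 y)
      - (∑ x ∈ Finset.range u, f0 z x 0 y') + (∑ x ∈ Finset.range u, f1 z x 0 y')
      = (∑ x ∈ Finset.range u, f0 0 x 0 y) - (∑ x ∈ Finset.range u, f1 0 x 0 y)
      - (∑ x ∈ Finset.range u, f0 0 x 0 y') + (∑ x ∈ Finset.range u, f1 0 x 0 y'))
    (cubk : ∀ w < v, ∀ x < u, ∀ x' < u,
      (∑ y ∈ Finset.range v, f0 0 x w y) - (∑ y ∈ Finset.range v, f1 0 x w y)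
      - (∑ y ∈ Finset.range v, f0 0 x' w y) + (∑ y ∈ Finset.range v, f1 0 x' w y)
      = (∑ y ∈ Finset.range v, f0 0 x 0 y) - (∑ y ∈ Finset.range v, f1 0 x 0 y)
      - (∑ y ∈ Finset.range v, f0 0 x' 0 y) + (∑ y ∈ Finset.range v, f1 0 x' 0 y)) :
    False := by
  have u2 := pu.two_le
  have v2 := pv.two_le
  -- base values
  have A0 : ∀ y < v, ∑ x ∈ Finset.range u, f0 0 x 0 y = if y ∈ S then (u : ℤ) else 0 := by
    intro y hy
    rw [Finset.sum_congr rfl (fun x hx => hf0 x (Finset.mem_range.1 hx) y hy)]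
    split_ifs <;> simp
  have A1 : ∀ y < v, ∑ x ∈ Finset.range u, f1 0 x 0 y = T.card := by
    intro y hy
    rw [Finset.sum_congr rfl (fun x hx => hf1 x (Finset.mem_range.1 hx) y hy)]
    rw [Finset.sum_ite_mem, Finset.inter_eq_right.2 hT]; simp
  have B0 : ∀ x < u, ∑ y ∈ Finset.range v, f0 0 x 0 y = S.card := by
    intro x hx
    rw [Finset.sum_congr rfl (fun y hy => hf0 x hx y (Finset.mem_range.1 hy))]
    rw [Finset.sum_ite_mem, Finset.inter_eq_right.2 hS]; simp
  have B1 : ∀ x < u, ∑ y ∈ Finset.range v, f1 0 x 0 y = if x ∈ T then (v : ℤ) else 0 := by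
    intro x hx
    rw [Finset.sum_congr rfl (fun y hy => hf1 x hx y (Finset.mem_range.1 hy))]
    split_ifs <;> simp
  have bd : ∀ (n : ℕ) (h : ℕ → ℤ), (∀ x, 0 ≤ h x ∧ h x ≤ 1) →
      0 ≤ ∑ x ∈ Finset.range n, h x ∧ ∑ x ∈ Finset.range n, h x ≤ n := by
    intro n h hh
    refine ⟨Finset.sum_nonneg fun x _ => (hh x).1, ?_⟩
    calc _ ≤ ∑ x ∈ Finset.range n, (1 : ℤ) := Finset.sum_le_sum fun x _ => (hh x).2
      _ = n := by simp
  have LJ : ∀ z, ∃ e : ℤ, z < u → 0 ≤ e ∧ e ≤ u ∧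
      (S.card : ℤ) * (u - e) ≤ ∑ y ∈ Finset.range v, ∑ x ∈ Finset.range u, f0 z x 0 y ∧
      ((v : ℤ) - S.card) * e ≤ ∑ y ∈ Finset.range v, ∑ x ∈ Finset.range u, f1 z x 0 y := by
    intro z
    by_cases hz : z < u
    · obtain ⟨e, he⟩ := layer u v S hS hSne hSlt (fun y => ∑ x ∈ Finset.range u, f0 z x 0 y)
        (fun y => ∑ x ∈ Finset.range u, f1 z x 0 y)
        (fun y _ => bd u _ fun x => b0 _ _ _ _) (fun y _ => bd u _ fun x => b1 _ _ _ _)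
        (by
          intro y hy y' hy' h h'
          have := cubj z hz y hy y' hy'
          rw [A0 y hy, A0 y' hy', A1 y hy, A1 y' hy', if_pos h, if_neg h'] at this
          linarith)
      exact ⟨e, fun _ => he⟩
    · exact ⟨0, fun h => absurd h hz⟩
  have LK : ∀ w, ∃ e : ℤ, w < v → 0 ≤ e ∧ e ≤ v ∧
      (T.card : ℤ) * (v - e) ≤ ∑ x ∈ Finset.range u, ∑ y ∈ Finset.range v, f1 0 x w y ∧
      ((u : ℤ) - T.card) * e ≤ ∑ x ∈ Finset.range u, ∑ y ∈ Finset.range v, f0 0 x w y := by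
    intro w
    by_cases hw : w < v
    · obtain ⟨e, he⟩ := layer v u T hT hTne hTlt (fun x => ∑ y ∈ Finset.range v, f1 0 x w y)
        (fun x => ∑ y ∈ Finset.range v, f0 0 x w y)
        (fun y _ => bd v _ fun x => b1 _ _ _ _) (fun y _ => bd v _ fun x => b0 _ _ _ _)
        (by
          intro y hy y' hy' h h'
          have := cubk w hw y hy y' hy'
          rw [B0 y hy, B0 y' hy', B1 y hy, B1 y' hy', if_pos h, if_neg h'] at this
          linarith)
      exact ⟨e, fun _ => he⟩
    · exact ⟨0, fun h => absurd h hw⟩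
  choose e he using LJ
  choose e' he' using LK
  have cI : ∀ n : ℕ, 1 ≤ n → ((Finset.Ico 1 n).card : ℤ) = n - 1 := by
    intro n hn; simp; omega
  have s0 := sum_split u v (by omega) (by omega) f0 (fun z x w y => (b0 z x w y).1)
  have s1 := sum_split u v (by omega) (by omega) f1 (fun z x w y => (b1 z x w y).1)
  have base0 : ∑ y ∈ Finset.range v, ∑ x ∈ Finset.range u, f0 0 x 0 y = u * S.card := by
    rw [Finset.sum_congr rfl (fun y hy => A0 y (Finset.mem_range.1 hy)),
      Finset.sum_ite_mem, Finset.inter_eq_right.2 hS]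
    simp [mul_comm]
  have base1 : ∑ y ∈ Finset.range v, ∑ x ∈ Finset.range u, f1 0 x 0 y = v * T.card := by
    rw [Finset.sum_congr rfl (fun y hy => A1 y (Finset.mem_range.1 hy))]
    simp
  have lin : ∀ (n : ℕ) (hn : 1 ≤ n) (k : ℤ) (m : ℤ) (h : ℕ → ℤ),
      ∑ z ∈ Finset.Ico 1 n, k * (m - h z) = k * (m * (n - 1) - ∑ z ∈ Finset.Ico 1 n, h z) := by
    intro n hn k m h
    rw [← Finset.mul_sum, Finset.sum_sub_distrib, Finset.sum_const, nsmul_eq_mul, cI n hn]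
    ring
  have j0 : (S.card : ℤ) * (u * (u - 1) - ∑ z ∈ Finset.Ico 1 u, e z) ≤
      ∑ z ∈ Finset.Ico 1 u, ∑ y ∈ Finset.range v, ∑ x ∈ Finset.range u, f0 z x 0 y := by
    rw [← lin u (by omega)]
    exact Finset.sum_le_sum fun z hz => (he z (Finset.mem_Ico.1 hz).2).2.2.1
  have j1 : ((v : ℤ) - S.card) * (∑ z ∈ Finset.Ico 1 u, e z) ≤
      ∑ z ∈ Finset.Ico 1 u, ∑ y ∈ Finset.range v, ∑ x ∈ Finset.range u, f1 z x 0 y := by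
    rw [Finset.mul_sum]
    exact Finset.sum_le_sum fun z hz => (he z (Finset.mem_Ico.1 hz).2).2.2.2
  have k1 : (T.card : ℤ) * (v * (v - 1) - ∑ z ∈ Finset.Ico 1 v, e' z) ≤
      ∑ w ∈ Finset.Ico 1 v, ∑ x ∈ Finset.range u, ∑ y ∈ Finset.range v, f1 0 x w y := by
    rw [← lin v (by omega)]
    exact Finset.sum_le_sum fun z hz => (he' z (Finset.mem_Ico.1 hz).2).2.2.1
  have k0 : ((u : ℤ) - T.card) * (∑ z ∈ Finset.Ico 1 v, e' z) ≤
      ∑ w ∈ Finset.Ico 1 v, ∑ x ∈ Finset.range u, ∑ y ∈ Finset.range v, f0 0 x w y := by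
    rw [Finset.mul_sum]
    exact Finset.sum_le_sum fun z hz => (he' z (Finset.mem_Ico.1 hz).2).2.2.2
  have up : ∀ (n : ℕ) (hn : 1 ≤ n) (h : ℕ → ℤ), (∀ z ∈ Finset.Ico 1 n, h z ≤ n) →
      ∑ z ∈ Finset.Ico 1 n, h z ≤ n * (n - 1) := by
    intro n hn h hh
    calc _ ≤ ∑ z ∈ Finset.Ico 1 n, (n : ℤ) := Finset.sum_le_sum hh
      _ = _ := by rw [Finset.sum_const, nsmul_eq_mul, cI n hn]; ring
  have sc := hSne.card_pos
  have tc := hTne.card_pos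
  exact arith u v pu pv huv S.card T.card (∑ z ∈ Finset.Ico 1 u, e z) (∑ z ∈ Finset.Ico 1 v, e' z)
    (by omega) (by omega) (by omega) (by omega)
    (Finset.sum_nonneg fun z hz => (he z (Finset.mem_Ico.1 hz).2).1)
    (Finset.sum_nonneg fun z hz => (he' z (Finset.mem_Ico.1 hz).2).1)
    (up u (by omega) e fun z hz => (he z (Finset.mem_Ico.1 hz).2).2.1)
    (up v (by omega) e' fun z hz => (he' z (Finset.mem_Ico.1 hz).2).2.1)
    (by linarith) (by linarith)

lemma mulred {M N p : ℕ} [NeZero M] (h : N * p = M) (t : ZMod M) :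
    ∃ x < p, (N : ZMod M) * t = x * N := by
  have p0 : 0 < p := Nat.pos_of_ne_zero (by rintro rfl; exact NeZero.ne M (by simpa using h.symm))
  refine ⟨t.val % p, Nat.mod_lt _ p0, ?_⟩
  conv_lhs => rw [← ZMod.natCast_zmod_val t]
  rw [← Nat.cast_mul, ← Nat.cast_mul, ZMod.natCast_eq_natCast_iff, mul_comm (t.val % p) N]
  have h2 := (Nat.ModEq.mul_left' N (Nat.mod_modEq t.val p)).symm
  exact h2.of_dvd (dvd_of_eq h.symm)

open Classical in
/-- Indicator of `A`. -/
noncomputable def ind {M : ℕ} (A : Finset (ZMod M)) (y : ZMod M) : ℤ := if y ∈ A then 1 else 0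

lemma fib {M N p : ℕ} [NeZero M] (h : N * p = M) (A : Finset (ZMod M)) (y : ZMod M) :
    resCount M N A y = ∑ x ∈ Finset.range p, ind A (y + x * N) := by
  classical
  have e : ∀ x : ℕ, ind A (y + x * N) = ∑ a ∈ A, if a = y + x * N then (1 : ℤ) else 0 := by
    intro x
    rw [Finset.sum_ite_eq' A (y + x * N) (fun _ => (1 : ℤ)), ind]
  simp_rw [e]
  rw [Finset.sum_comm, resCount]
  apply Finset.sum_congr rfl
  intro a _
  have N0 : N ≠ 0 := by rintro rfl; exact NeZero.ne M (by simpa using h.symm)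
  by_cases hd : (N : ZMod M) ∣ a - y
  · rw [if_pos hd]
    obtain ⟨t, ht⟩ := hd
    obtain ⟨x, hx, hxt⟩ := mulred h t
    rw [hxt] at ht
    have ha : a = y + x * N := by rw [← ht]; ring
    rw [Finset.sum_eq_single_of_mem x (Finset.mem_range.2 hx), if_pos ha]
    intro x' hx' hne
    rw [if_neg]
    intro h2
    apply hne
    rw [ha] at h2
    have h3 : ((N * x : ℕ) : ZMod M) = ((N * x' : ℕ) : ZMod M) := by
      push_cast
      linear_combination h2
    rw [ZMod.natCast_eq_natCast_iff, ← h] at h3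
    exact ((Nat.ModEq.mul_left_cancel' N0 h3).eq_of_lt_of_lt hx (Finset.mem_range.1 hx')).symm
  · rw [if_neg hd]
    symm
    apply Finset.sum_eq_zero
    intro x _
    rw [if_neg]
    rintro rfl
    exact hd ⟨x, by ring⟩

lemma cub_gen (M N p η γ : ℕ) [NeZero M] (hMN : N * p = M) (A : Finset (ZMod M))
    (hc : cycDvd M N A) (a a' : ZMod M)
    (hd : ∀ s, s ∣ N → s ≠ N → (s : ZMod M) ∣ a' - a ∨ s ∣ η ∨ s ∣ γ) (z y y' : ℕ) :
    (∑ x ∈ Finset.range p, ind A (a + z * η + x * N + y * γ))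
    - (∑ x ∈ Finset.range p, ind A (a' + z * η + x * N + y * γ))
    - (∑ x ∈ Finset.range p, ind A (a + z * η + x * N + y' * γ))
    + (∑ x ∈ Finset.range p, ind A (a' + z * η + x * N + y' * γ))
    = (∑ x ∈ Finset.range p, ind A (a + x * N + y * γ))
    - (∑ x ∈ Finset.range p, ind A (a' + x * N + y * γ))
    - (∑ x ∈ Finset.range p, ind A (a + x * N + y' * γ))
    + (∑ x ∈ Finset.range p, ind A (a' + x * N + y' * γ)) := by
  have e : ∀ (b : ZMod M) (z y : ℕ), ∑ x ∈ Finset.range p, ind A (b + z * η + x * N + y * γ) =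
      resCount M N A (b + z * η + y * γ) := by
    intro b z y
    rw [fib hMN]
    apply Finset.sum_congr rfl
    intro x _
    congr 1
    ring
  have e0 : ∀ (b : ZMod M) (y : ℕ), ∑ x ∈ Finset.range p, ind A (b + x * N + y * γ) =
      resCount M N A (b + y * γ) := by
    intro b y
    have := e b 0 y
    simpa using this
  simp only [e, e0]
  have hcub := cuboid M N ⟨p, hMN.symm⟩ A hc (a' - a) (z * η) (((y : ZMod M) - y') * γ) (by
    intro s hs hne
    rcases hd s hs hne with h | h | h
    · exact Or.inl h
    · exact Or.inr (Or.inl (Dvd.dvd.mul_left (Nat.cast_dvd_cast h) _))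
    · exact Or.inr (Or.inr (Dvd.dvd.mul_left (Nat.cast_dvd_cast h) _))) (a + y' * γ)
  have i1 : a + y' * γ + (a' - a) + z * η + ((y : ZMod M) - y') * γ = a' + z * η + y * γ := by ring
  have i2 : a + y' * γ + z * η + ((y : ZMod M) - y') * γ = a + z * η + y * γ := by ring
  have i3 : a + y' * γ + (a' - a) + ((y : ZMod M) - y') * γ = a' + y * γ := by ring
  have i4 : a + y' * γ + (a' - a) + z * η = a' + z * η + y' * γ := by ring
  have i5 : a + y' * γ + (a' - a) = a' + y' * γ := by ring
  have i6 : a + y' * γ + z * η = a + z * η + y' * γ := by ring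
  have i7 : a + y' * γ + ((y : ZMod M) - y') * γ = a + y * γ := by ring
  rw [i1, i2, i3, i4, i5, i6, i7] at hcub
  linarith

lemma plane (M G u v : ℕ) [NeZero M] (hM : M = G * u * v) (huv : u.Coprime v)
    (A : Set (ZMod M)) (a : ZMod M)
    (hF : Fibered M u (A ∩ gridSet M a G)) (hnF : ¬ Fibered M v (A ∩ gridSet M a G)) :
    (∀ x y : ℕ, a + x * (G * v : ℕ) + y * (G * u : ℕ) ∈ A ↔ a + y * (G * u : ℕ) ∈ A) ∧
    ∃ y < v, a + y * (G * u : ℕ) ∉ A := by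
  have M0 : M ≠ 0 := NeZero.ne M
  have u0 : 0 < u := Nat.pos_of_ne_zero (by rintro rfl; simp at hM; omega)
  have v0 : 0 < v := Nat.pos_of_ne_zero (by rintro rfl; simp at hM; omega)
  have d1 : M / u = G * v := by
    rw [hM, show G * u * v = G * v * u by ring, Nat.mul_div_cancel _ u0]
  have d2 : M / v = G * u := by rw [hM, Nat.mul_div_cancel _ v0]
  unfold Fibered at hF hnF
  rw [d1] at hF
  rw [d2] at hnF
  have one : ∀ x y : ℕ, a + x * (G * v : ℕ) + y * (G * u : ℕ) ∈ A ↔ a + y * (G * u : ℕ) ∈ A := by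
    intro x y
    constructor
    · intro h
      refine (hF _ ⟨h, ?_⟩ (?_ : a + y * (G * u : ℕ) ∈ _)).1
      · exact ⟨x * v + y * u, by push_cast; ring⟩
      · exact ⟨-x, by push_cast; ring⟩
    · intro h
      refine (hF _ ⟨h, ?_⟩ (?_ : a + x * (G * v : ℕ) + y * (G * u : ℕ) ∈ _)).1
      · exact ⟨y * u, by push_cast; ring⟩
      · exact ⟨x, by push_cast; ring⟩
  refine ⟨one, ?_⟩
  by_contra hcon
  push Not at hcon
  apply hnF
  have all : ∀ q ∈ gridSet M a G, q ∈ A := by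
    rintro q ⟨t, ht⟩
    have bez : (u : ℤ) * u.gcdA v + v * u.gcdB v = 1 := by
      rw [← Nat.gcd_eq_gcd_ab, huv]; rfl
    have bez' : (u : ZMod M) * (u.gcdA v : ℤ) + v * (u.gcdB v : ℤ) = 1 := by
      exact_mod_cast congrArg (Int.cast : ℤ → ZMod M) bez
    obtain ⟨x, hx, hx'⟩ := mulred (M := M) (N := G * v) (p := u) (by rw [hM]; ring)
      ((u.gcdB v : ℤ) * t)
    obtain ⟨y, hy, hy'⟩ := mulred (M := M) (N := G * u) (p := v) (by rw [hM])
      ((u.gcdA v : ℤ) * t)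
    have : q = a + x * (G * v : ℕ) + y * (G * u : ℕ) := by
      rw [← hx', ← hy']
      push_cast
      linear_combination ht - (G : ZMod M) * t * bez'
    rw [this, one]
    exact hcon y hy
  intro s hs q hq
  have hq' : q ∈ gridSet M a G := by
    have h1 : (G : ZMod M) ∣ s - a := hs.2
    have h2 : ((G * u : ℕ) : ZMod M) ∣ q - s := hq
    have h3 : (G : ZMod M) ∣ q - s := (Nat.cast_dvd_cast (Dvd.intro u rfl)).trans h2
    have := dvd_add h3 h1
    simpa [gridSet] using this
  exact ⟨all q hq', hq'⟩

lemma total_le (M Q R u v : ℕ) [NeZero M] (hM : M = R * (u ^ 2 * v ^ 2)) (huv : u.Coprime v)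
    (hQ : Q ∣ R) (A : Finset (ZMod M)) (b : ZMod M) :
    ∑ z ∈ Finset.range u, ∑ w ∈ Finset.range v, ∑ x ∈ Finset.range u, ∑ y ∈ Finset.range v,
      ind A (b + z * (R * v ^ 2 : ℕ) + x * (R * u * v ^ 2 : ℕ) + w * (R * u ^ 2 : ℕ)
        + y * (R * v * u ^ 2 : ℕ)) ≤ resCount M Q A b := by
  classical
  have M0 : M ≠ 0 := NeZero.ne M
  have R0 : R ≠ 0 := by rintro rfl; simp at hM; omega
  set φ : ℕ × ℕ × ℕ × ℕ → ZMod M := fun q =>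
    b + q.1 * (R * v ^ 2 : ℕ) + q.2.2.1 * (R * u * v ^ 2 : ℕ) + q.2.1 * (R * u ^ 2 : ℕ)
        + q.2.2.2 * (R * v * u ^ 2 : ℕ) with hφ
  set I := Finset.range u ×ˢ Finset.range v ×ˢ Finset.range u ×ˢ Finset.range v with hI
  have e : ∑ z ∈ Finset.range u, ∑ w ∈ Finset.range v, ∑ x ∈ Finset.range u,
      ∑ y ∈ Finset.range v,
      ind A (b + z * (R * v ^ 2 : ℕ) + x * (R * u * v ^ 2 : ℕ) + w * (R * u ^ 2 : ℕ)
        + y * (R * v * u ^ 2 : ℕ)) = ∑ q ∈ I, ind A (φ q) := by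
    rw [hI, Finset.sum_product]
    refine Finset.sum_congr rfl fun z _ => ?_
    rw [Finset.sum_product]
    refine Finset.sum_congr rfl fun w _ => ?_
    rw [Finset.sum_product]
  rw [e]
  have inj : Set.InjOn φ I := by
    rintro ⟨z, w, x, y⟩ h1 ⟨z', w', x', y'⟩ h2 heq
    simp only [hI, Finset.coe_product, Set.mem_prod, Finset.coe_range, Set.mem_Iio] at h1 h2
    obtain ⟨hz, hw, hx, hy⟩ := h1
    obtain ⟨hz', hw', hx', hy'⟩ := h2
    have h3 : ((R * ((z + u * x) * v ^ 2 + (w + v * y) * u ^ 2) : ℕ) : ZMod M) =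
        ((R * ((z' + u * x') * v ^ 2 + (w' + v * y') * u ^ 2) : ℕ) : ZMod M) := by
      simp only [hφ] at heq
      push_cast at heq ⊢
      linear_combination heq
    rw [ZMod.natCast_eq_natCast_iff, hM] at h3
    have h4 := Nat.ModEq.mul_left_cancel' R0 h3
    have key : ∀ p q r s p' q' r' s' U V : ℕ, U.Coprime V → p < U → q < U → p' < U → q' < U →
        (p + U * q) * V ^ 2 + r * U ^ 2 ≡ (p' + U * q') * V ^ 2 + s * U ^ 2 [MOD U ^ 2] →
        p = p' ∧ q = q' := by
      intro p q r s p' q' r' s' U V hUV hp hq hp' hq' h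
      have h5 : (p + U * q) * V ^ 2 ≡ (p' + U * q') * V ^ 2 [MOD U ^ 2] := by
        have a1 : ∀ r, r * U ^ 2 ≡ 0 [MOD U ^ 2] := fun r =>
          (Nat.modEq_zero_iff_dvd).2 (Dvd.intro_left r rfl)
        have := ((Nat.ModEq.refl ((p + U * q) * V ^ 2)).add (a1 r)).symm.trans
          (h.trans ((Nat.ModEq.refl ((p' + U * q') * V ^ 2)).add (a1 s)))
        simpa using this
      have h6 := Nat.ModEq.cancel_right_of_coprime (Nat.Coprime.pow 2 2 hUV) h5
      have lt : ∀ p q, p < U → q < U → p + U * q < U ^ 2 := by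
        intro p q hp hq; nlinarith
      have h7 := h6.eq_of_lt_of_lt (lt p q hp hq) (lt p' q' hp' hq')
      have h8 : p = p' := by
        have := congrArg (· % U) h7
        simpa [Nat.add_mul_mod_self_left, Nat.mod_eq_of_lt hp, Nat.mod_eq_of_lt hp'] using this
      subst h8
      refine ⟨rfl, Nat.eq_of_mul_eq_mul_left (by omega) (Nat.add_left_cancel h7)⟩
    have r1 := key z x _ _ z' x' 0 0 u v huv hz hx hz' hx' (h4.of_dvd (Dvd.intro _ rfl))
    have r2 := key w y _ _ w' y' 0 0 v u huv.symm hw hy hw' hy'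
      (by
        have := h4.of_dvd (Dvd.intro_left (u ^ 2) rfl)
        rwa [add_comm, add_comm ((z' + u * x') * v ^ 2)] at this)
    simp [r1, r2]
  rw [resCount_eq_card]
  unfold ind
  rw [Finset.sum_boole]
  norm_cast
  apply Finset.card_le_card_of_injOn φ
  · intro q hq
    simp only [Finset.coe_filter, Set.mem_ofPred_eq] at hq ⊢
    refine ⟨hq.2, ?_⟩
    have : ((R : ℕ) : ZMod M) ∣ φ q - b := by
      refine ⟨q.1 * v ^ 2 + q.2.2.1 * (u * v ^ 2) + q.2.1 * u ^ 2 + q.2.2.2 * (v * u ^ 2), ?_⟩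
      simp only [hφ]
      push_cast
      ring
    exact (Nat.cast_dvd_cast hQ).trans this
  · exact inj.mono (by intro q hq; simp only [Finset.coe_filter, Set.mem_ofPred_eq] at hq; exact hq.1)

lemma resCount_mono (M Q Q' : ℕ) (h : Q ∣ Q') (A : Finset (ZMod M)) (b : ZMod M) :
    resCount M Q' A b ≤ resCount M Q A b := by
  classical
  unfold resCount
  apply Finset.sum_le_sum
  intro a _
  by_cases h1 : (Q' : ZMod M) ∣ a - b
  · rw [if_pos h1, if_pos ((Nat.cast_dvd_cast h).trans h1)]
  · rw [if_neg h1]; split_ifs <;> simp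

/-- Under the extended corner assumption, `Φ_{M/p_j}` and `Φ_{M/p_k}`
cannot both divide `A`. -/
theorem statement17
    (pi pj pk : ℕ) (hpi : pi.Prime) (hpj : pj.Prime) (hpk : pk.Prime)
    (hij : pi ≠ pj) (hik : pi ≠ pk) (hjk : pj ≠ pk)
    (ni nj nk : ℕ) (hni : 1 ≤ ni) (hnj : 2 ≤ nj) (hnk : 2 ≤ nk)
    (M : ℕ) (hM : M = pi ^ ni * pj ^ nj * pk ^ nk)
    (A B : Finset (ZMod M))
    (htile : IsTiling M (A : Set (ZMod M)) (B : Set (ZMod M)))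
    (hcardA : A.card = pi * pj * pk)
    (hPhiM : cycDvd M M A)
    (x0 : ZMod M) (D : ℕ) (hD : D = pi ^ (ni - 1) * pj ^ (nj - 1) * pk ^ (nk - 1))
    (hcorner : ExtCorner M pi pj pk (A : Set (ZMod M)) (gridSet M x0 D)) :
    ¬ (cycDvd M (M / pj) A ∧ cycDvd M (M / pk) A) := by
  rintro ⟨hcj, hck⟩
  classical
  have M0 : M ≠ 0 := by
    rw [hM]
    exact mul_ne_zero (mul_ne_zero (pow_ne_zero _ hpi.ne_zero) (pow_ne_zero _ hpj.ne_zero))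
      (pow_ne_zero _ hpk.ne_zero)
  have : NeZero M := ⟨M0⟩
  have cjk : pj.Coprime pk := (Nat.coprime_primes hpj hpk).2 hjk
  have cij : pi.Coprime pj := (Nat.coprime_primes hpi hpj).2 hij
  have cik : pi.Coprime pk := (Nat.coprime_primes hpi hpk).2 hik
  -- the bound on residue classes modulo `pi ^ ni`
  have hcardB : A.card * B.card = M := by
    have := tiling_card M A B htile (fun _ => (1 : ℕ))
    simpa using this
  have hB : ¬ pi ^ ni ∣ B.card := by
    rintro ⟨t, ht⟩
    rw [hcardA, ht, hM] at hcardB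
    have h1 : pi ^ ni * (pi * (pj * pk * t)) = pi ^ ni * (pj ^ nj * pk ^ nk) := by
      rw [← mul_assoc (pi ^ ni) (pj ^ nj), ← hcardB]; ring
    have h2 := Nat.eq_of_mul_eq_mul_left (pow_pos hpi.pos ni) h1
    have h3 : pi ∣ pj ^ nj * pk ^ nk := ⟨_, h2.symm⟩
    have h4 : pi.Coprime (pj ^ nj * pk ^ nk) :=
      Nat.Coprime.mul_right (cij.pow_right nj) (cik.pow_right nk)
    exact hpi.one_lt.ne' (Nat.Coprime.eq_one_of_dvd h4 h3)
  have hdi : pi ^ ni ∣ M := ⟨pj ^ nj * pk ^ nk, by rw [hM]; ring⟩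
  obtain ⟨k, hk, hck'⟩ := exists_alpha M pi ni hpi hdi A B htile hB
  obtain ⟨mj, rfl⟩ : ∃ mj, nj = mj + 2 := ⟨nj - 2, by omega⟩
  obtain ⟨mk, rfl⟩ : ∃ mk, nk = mk + 2 := ⟨nk - 2, by omega⟩
  obtain ⟨mi, rfl⟩ : ∃ mi, ni = mi + 1 := ⟨ni - 1, by omega⟩
  obtain ⟨R, hR⟩ : ∃ R, R = pi ^ (mi + 1) * pj ^ mj * pk ^ mk := ⟨_, rfl⟩
  have hMR : M = R * (pj ^ 2 * pk ^ 2) := by rw [hM, hR]; ring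
  have hQR : pi ^ (k + 1) ∣ R := by
    rw [hR, mul_assoc]
    exact Dvd.dvd.mul_right (pow_dvd_pow pi (by omega)) _
  have tot : ∀ b : ZMod M, resCount M (pi ^ (k + 1)) A b ≤ pj * pk := by
    intro b
    have h1 := class_bound M pi k hpi ((pow_dvd_pow pi (by omega)).trans hdi) A hck' b
    rw [hcardA] at h1
    push_cast at h1
    have h2 : (0 : ℤ) < pi := by exact_mod_cast hpi.pos
    rw [mul_assoc] at h1
    exact le_of_mul_le_mul_left h1 h2
  obtain ⟨a, ha, a', ha', hgcd, hF, hnF, hF', hnF'⟩ := hcorner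
  -- the two planes
  have hG : M / (pj * pk) = R * pj * pk := by
    rw [hMR, show R * (pj ^ 2 * pk ^ 2) = R * pj * pk * (pj * pk) by ring,
      Nat.mul_div_cancel _ (Nat.mul_pos hpj.pos hpk.pos)]
  rw [hG] at hF hnF hF' hnF'
  obtain ⟨P1, y1, hy1, hy1'⟩ := plane M (R * pj * pk) pj pk (by rw [hMR]; ring) cjk _ a hF hnF
  obtain ⟨P2, x1, hx1, hx1'⟩ := plane M (R * pj * pk) pk pj (by rw [hMR]; ring) cjk.symm _ a' hF' hnF'
  have n1 : R * pj * pk * pk = R * pj * pk ^ 2 := by ring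
  have n2 : R * pj * pk * pj = R * pk * pj ^ 2 := by ring
  rw [n1, n2] at P1 P2
  rw [n2] at hy1'
  rw [n1] at hx1'
  have dj : M / pj = R * pj * pk ^ 2 := by
    rw [hMR, show R * (pj ^ 2 * pk ^ 2) = R * pj * pk ^ 2 * pj by ring,
      Nat.mul_div_cancel _ hpj.pos]
  have dk : M / pk = R * pk * pj ^ 2 := by
    rw [hMR, show R * (pj ^ 2 * pk ^ 2) = R * pk * pj ^ 2 * pk by ring,
      Nat.mul_div_cancel _ hpk.pos]
  rw [dj] at hcj
  rw [dk] at hck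
  -- divisors
  have hai : ((M / pi : ℕ) : ZMod M) ∣ a' - a := by
    have : ((M / pi : ℕ) : ZMod M) ∣ a - a' := by
      apply dvd_of_val
      rw [← hgcd]
      exact Nat.gcd_dvd_left _ _
    rw [← neg_sub]
    exact (dvd_neg).2 this
  have primes : ∀ q : ℕ, q.Prime → q ∣ M → q = pi ∨ q = pj ∨ q = pk := by
    intro q hq hqM
    rw [hM] at hqM
    rcases (hq.dvd_mul).1 hqM with h | h
    · rcases (hq.dvd_mul).1 h with h | h
      · exact Or.inl ((Nat.prime_dvd_prime_iff_eq hq hpi).1 (hq.dvd_of_dvd_pow h))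
      · exact Or.inr (Or.inl ((Nat.prime_dvd_prime_iff_eq hq hpj).1 (hq.dvd_of_dvd_pow h)))
    · exact Or.inr (Or.inr ((Nat.prime_dvd_prime_iff_eq hq hpk).1 (hq.dvd_of_dvd_pow h)))
  have div : ∀ N, N ∣ M → ∀ s, s ∣ N → s ≠ N → s * pi ∣ N ∨ s * pj ∣ N ∨ s * pk ∣ N := by
    intro N hN s hs hne
    obtain ⟨t, rfl⟩ := hs
    have ht : t ≠ 1 := by rintro rfl; simp at hne
    obtain ⟨q, hq, hqt⟩ := Nat.exists_prime_and_dvd ht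
    have hd : s * q ∣ s * t := Nat.mul_dvd_mul_left s hqt
    rcases primes q hq ((Dvd.dvd.mul_left hqt s).trans hN) with rfl | rfl | rfl
    · exact Or.inl hd
    · exact Or.inr (Or.inl hd)
    · exact Or.inr (Or.inr hd)
  have divi : ∀ N, N ∣ M → ∀ s, s * pi ∣ N → (s : ZMod M) ∣ a' - a := by
    intro N hN s hs
    exact (Nat.cast_dvd_cast (Nat.dvd_div_of_mul_dvd (by rw [mul_comm]; exact hs.trans hN))).trans hai
  have CJ := cub_gen M (R * pj * pk ^ 2) pj (R * pk ^ 2) (R * pk * pj ^ 2) (by rw [hMR]; ring) A hcj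
    a a' (by
      intro s hs hne
      have hNM : R * pj * pk ^ 2 ∣ M := ⟨pj, by rw [hMR]; ring⟩
      rcases div _ hNM s hs hne with h | h | h
      · exact Or.inl (divi _ hNM s h)
      · refine Or.inr (Or.inl (Nat.dvd_of_mul_dvd_mul_right hpj.pos (h.trans (dvd_of_eq ?_))))
        ring
      · refine Or.inr (Or.inr (Nat.dvd_of_mul_dvd_mul_right hpk.pos ((h.trans hNM).trans (dvd_of_eq ?_))))
        rw [hMR]; ring)
  have CK := cub_gen M (R * pk * pj ^ 2) pk (R * pj ^ 2) (R * pj * pk ^ 2) (by rw [hMR]; ring) A hck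
    a a' (by
      intro s hs hne
      have hNM : R * pk * pj ^ 2 ∣ M := ⟨pk, by rw [hMR]; ring⟩
      rcases div _ hNM s hs hne with h | h | h
      · exact Or.inl (divi _ hNM s h)
      · refine Or.inr (Or.inr (Nat.dvd_of_mul_dvd_mul_right hpj.pos ((h.trans hNM).trans (dvd_of_eq ?_))))
        rw [hMR]; ring
      · refine Or.inr (Or.inl (Nat.dvd_of_mul_dvd_mul_right hpk.pos (h.trans (dvd_of_eq ?_))))
        ring)
  have bind : ∀ y, 0 ≤ ind A y ∧ ind A y ≤ 1 := by
    intro y; unfold ind; split_ifs <;> simp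
  have ss : ∀ (n : ℕ) (P : ℕ → Prop) [DecidablePred P], (∃ y < n, ¬ P y) → ((Finset.range n).filter P).card < n := by
    rintro n P _ ⟨y, hy, hP⟩
    have : (Finset.range n).filter P ⊂ Finset.range n := by
      rw [Finset.filter_ssubset]
      exact ⟨y, Finset.mem_range.2 hy, hP⟩
    simpa using Finset.card_lt_card this
  refine combi pj pk hpj hpk hjk
    (fun z x w y => ind A (a + z * (R * pk ^ 2 : ℕ) + x * (R * pj * pk ^ 2 : ℕ)
      + w * (R * pj ^ 2 : ℕ) + y * (R * pk * pj ^ 2 : ℕ)))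
    (fun z x w y => ind A (a' + z * (R * pk ^ 2 : ℕ) + x * (R * pj * pk ^ 2 : ℕ)
      + w * (R * pj ^ 2 : ℕ) + y * (R * pk * pj ^ 2 : ℕ)))
    (fun _ _ _ _ => bind _) (fun _ _ _ _ => bind _)
    ((total_le M _ R pj pk hMR cjk hQR A a).trans (tot a))
    ((total_le M _ R pj pk hMR cjk hQR A a').trans (tot a'))
    ((Finset.range pk).filter fun y => a + y * (R * pk * pj ^ 2 : ℕ) ∈ A)
    ((Finset.range pj).filter fun x => a' + x * (R * pj * pk ^ 2 : ℕ) ∈ A)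
    (Finset.filter_subset _ _) ⟨0, ?_⟩ (ss _ (fun y => a + y * (R * pk * pj ^ 2 : ℕ) ∈ A) ⟨y1, hy1, hy1'⟩)
    (Finset.filter_subset _ _) ⟨0, ?_⟩ 
    (ss _ (fun x => a' + x * (R * pj * pk ^ 2 : ℕ) ∈ A) ⟨x1, hx1, hx1'⟩) ?_ ?_ ?_ ?_
  · rw [Finset.mem_filter]
    refine ⟨Finset.mem_range.2 hpk.pos, ?_⟩
    simpa using ha.1
  · rw [Finset.mem_filter]
    refine ⟨Finset.mem_range.2 hpj.pos, ?_⟩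
    simpa using ha'.1
  · intro x hx y hy
    have h1 := P1 x y
    simp only [Finset.mem_coe] at h1
    have e : a + ((0 : ℕ) : ZMod M) * (R * pk ^ 2 : ℕ) + x * (R * pj * pk ^ 2 : ℕ)
      + ((0 : ℕ) : ZMod M) * (R * pj ^ 2 : ℕ) + y * (R * pk * pj ^ 2 : ℕ) =
      a + x * (R * pj * pk ^ 2 : ℕ) + y * (R * pk * pj ^ 2 : ℕ) := by
      rw [Nat.cast_zero]; ring
    simp only [e, ind, h1, Finset.mem_filter, Finset.mem_range, hy, true_and]
  · intro x hx y hy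
    have h1 := P2 y x
    simp only [Finset.mem_coe] at h1
    have e : a' + ((0 : ℕ) : ZMod M) * (R * pk ^ 2 : ℕ) + x * (R * pj * pk ^ 2 : ℕ)
      + ((0 : ℕ) : ZMod M) * (R * pj ^ 2 : ℕ) + y * (R * pk * pj ^ 2 : ℕ) =
      a' + y * (R * pk * pj ^ 2 : ℕ) + x * (R * pj * pk ^ 2 : ℕ) := by
      rw [Nat.cast_zero]; ring
    simp only [e, ind, h1, Finset.mem_filter, Finset.mem_range, hx, true_and]
  · intro z _ y _ y' _
    have h := CJ z y y'
    simp only [Nat.cast_zero, zero_mul, add_zero]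
    exact h
  · intro w _ x _ x' _
    have h := CK w x x'
    have e : ∀ (b : ZMod M) (w x y : ℕ), b + ((0 : ℕ) : ZMod M) * (R * pk ^ 2 : ℕ)
      + x * (R * pj * pk ^ 2 : ℕ) + w * (R * pj ^ 2 : ℕ) + y * (R * pk * pj ^ 2 : ℕ) =
      b + w * (R * pj ^ 2 : ℕ) + y * (R * pk * pj ^ 2 : ℕ) + x * (R * pj * pk ^ 2 : ℕ) := by
      intro b w x y
      rw [Nat.cast_zero]; ring
    simp only [e]
    simp only [Nat.cast_zero, zero_mul, add_zero]
    exact h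
end
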